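/- arXiv:1703.04999 — 2 statements merged into one kernel-verified Lean document; each statement's English description precedes it below -/
import Mathlib

section
/- Let r₀ > 0 and let γ_R ∈ ℝ with γ_R ∉ ℤ. Define for l ∈ ℤ the free Regge interpolation values σ₀(l) = −e^{iπγ_R}·H^{(2)}_{l−γ_R}(r₀)/H^{(1)}_{l−γ_R}(r₀). Then σ₀(l) → e^{iπγ_R} as l → +∞ and σ₀(l) → e^{−iπγ_R} as l → −∞. -/
/-!
Put `ν = α + n` with `α ∉ ℤ` and `x = r / 2`, and write `J_ν(r) = x ^ ν / Γ(ν + 1) * F(ν + 1)`,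
where `F(b) = ∑ (-x²)^k / (k! b (b + 1) ⋯ (b + k - 1))` is the hypergeometric function `₀F₁`.
Since `ν` stays away from the integers, dominated convergence gives `F(1 ± ν) → 1` as `n → ∞`,
while `x ^ n / Γ(ν + 1)` and `x ^ n Γ(1 - ν)` tend to `0` by the ratio test. Hence `J_ν → 0`,
`J_{-ν} → ∞`, and since the phases `e^{±iπν}` are bounded, `H²_ν / H¹_ν → -1`. This is the limit at
`+∞`; the one at `-∞` reduces to it by the reflection formulas `H¹_{-ν} = e^{iπν} H¹_ν` and
`H²_{-ν} = e^{-iπν} H²_ν`, which turn `σ₀(-l)` at flux `γ` into `σ₀(l)` at flux `-γ`.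
-/

/-- `x^w = exp(w * log x)` with the real logarithm, for `x > 0`. -/
noncomputable def cpowR (x : ℝ) (w : ℂ) : ℂ := Complex.exp (w * (Real.log x : ℂ))

/-- Bessel function of the first kind, defined by its power series. -/
noncomputable def besselJ (ν : ℂ) (r : ℝ) : ℂ :=
  ∑' k : ℕ, (-1 : ℂ) ^ k * cpowR (r / 2) (ν + 2 * k) /
    (Complex.Gamma (k + 1) * Complex.Gamma (k + ν + 1))

/-- Hankel function of the first kind, for `ν ∉ ℤ`. -/
noncomputable def hankel1 (ν : ℂ) (r : ℝ) : ℂ :=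
  (besselJ (-ν) r - Complex.exp (-(Real.pi * Complex.I * ν)) * besselJ ν r) /
    (Complex.I * Complex.sin (Real.pi * ν))

/-- Hankel function of the second kind, for `ν ∉ ℤ`. -/
noncomputable def hankel2 (ν : ℂ) (r : ℝ) : ℂ :=
  (Complex.exp (Real.pi * Complex.I * ν) * besselJ ν r - besselJ (-ν) r) /
    (Complex.I * Complex.sin (Real.pi * ν))

open Bornology Complex Filter Topology

open scoped Nat Real

theorem summable_of_eventually_succ_eq_mul {R : Type*} [NonUnitalSeminormedRing R]
    [CompleteSpace R] {f c : ℕ → R} (hf : ∀ᶠ n in atTop, f (n + 1) = c n * f n)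
    (hc : Tendsto c atTop (𝓝 0)) : Summable f := by
  have hc_le : ∀ᶠ n in atTop, ‖c n‖ ≤ 1 / 2 :=
    (tendsto_zero_iff_norm_tendsto_zero.1 hc).eventually_le_const one_half_pos
  refine summable_of_ratio_norm_eventually_le one_half_lt_one ?_
  filter_upwards [hf, hc_le] with n hn hcn
  calc ‖f (n + 1)‖ = ‖c n * f n‖ := by rw [hn]
    _ ≤ ‖c n‖ * ‖f n‖ := norm_mul_le _ _
    _ ≤ 1 / 2 * ‖f n‖ := by gcongr

theorem tendsto_const_add_natCast_cobounded (s : ℂ) :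
    Tendsto (fun n : ℕ ↦ s + n) atTop (cobounded ℂ) :=
  (tendsto_const_add_cobounded s).comp tendsto_natCast_atTop_cobounded

theorem tendsto_const_sub_natCast_cobounded (s : ℂ) :
    Tendsto (fun n : ℕ ↦ s - n) atTop (cobounded ℂ) :=
  (tendsto_const_sub_cobounded s).comp tendsto_natCast_atTop_cobounded

theorem summable_pow_div_Gamma_add_natCast (x s : ℂ) :
    Summable fun n : ℕ ↦ x ^ n / Gamma (s + n) := by
  have hs := tendsto_const_add_natCast_cobounded s
  refine summable_of_eventually_succ_eq_mul (c := fun n : ℕ ↦ x / (s + n)) ?_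
    (by simpa [div_eq_mul_inv] using (tendsto_inv₀_cobounded.comp hs).const_mul x)
  filter_upwards [hs.eventually_ne_cobounded 0] with n hn
  rw [Nat.cast_succ, ← add_assoc, Gamma_add_one _ hn, pow_succ', mul_div_mul_comm]

theorem summable_pow_mul_Gamma_sub_natCast (x s : ℂ) :
    Summable fun n : ℕ ↦ x ^ n * Gamma (s - n) := by
  have hs := tendsto_const_sub_natCast_cobounded (s - 1)
  refine summable_of_eventually_succ_eq_mul (c := fun n : ℕ ↦ x / (s - 1 - n)) ?_
    (by simpa [div_eq_mul_inv] using (tendsto_inv₀_cobounded.comp hs).const_mul x)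
  filter_upwards [hs.eventually_ne_cobounded 0] with n hn
  have hGamma : Gamma (s - n) = (s - 1 - n) * Gamma (s - 1 - n) := by
    rw [← Gamma_add_one _ hn]
    congr 1
    ring
  rw [hGamma, Nat.cast_succ, show s - (n + 1) = s - 1 - n by ring]
  field_simp
  ring

theorem ne_neg_natCast_of_le_norm_add {R : Type*} [NormedRing R] {b : R} {δ : ℝ} (hδ : 0 < δ)
    (hb : ∀ j : ℕ, δ ≤ ‖b + j‖) (k : ℕ) : b ≠ -k := by
  rintro rfl
  exact hδ.not_ge (by simpa using hb k)

theorem pow_le_norm_ascPochhammer_eval {K : Type*} [NormedField K] {b : K} {δ : ℝ} (hδ : 0 ≤ δ)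
    (hb : ∀ j : ℕ, δ ≤ ‖b + j‖) (k : ℕ) : δ ^ k ≤ ‖(ascPochhammer K k).eval b‖ := by
  induction k with
  | zero => simp
  | succ k ih =>
    rw [pow_succ, ascPochhammer_succ_eval, norm_mul]
    gcongr
    exact hb k

theorem tendsto_ascPochhammer_eval_cobounded {K ι : Type*} [NormedField K] {l : Filter ι}
    {b : ι → K} (hb : Tendsto b l (cobounded K)) {k : ℕ} (hk : k ≠ 0) :
    Tendsto (fun i ↦ (ascPochhammer K k).eval (b i)) l (cobounded K) := by
  have hdeg : 0 < (ascPochhammer K k).degree := by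
    rw [← Polynomial.natDegree_pos_iff_degree_pos, ascPochhammer_natDegree]
    exact hk.bot_lt
  exact tendsto_norm_atTop_iff_cobounded.1
    ((ascPochhammer K k).tendsto_norm_atTop hdeg (tendsto_norm_atTop_iff_cobounded.2 hb))

theorem regularizedHGFun_zero_singleton (b z : ℂ) :
    regularizedHGFun 0 {b} z = ∑' k : ℕ, z ^ k / (k ! * Gamma (b + k)) := by
  simp [regularizedHGFun, regularizedHGFunSeries, FormalMultilinearSeries.sum,
    regularizedHGFunCoeff, div_eq_mul_inv, mul_comm]

theorem Gamma_mul_regularizedHGFun_zero_singleton {b : ℂ} (hb : ∀ k : ℕ, b ≠ -k) (z : ℂ) :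
    Gamma b * regularizedHGFun 0 {b} z =
      ∑' k : ℕ, z ^ k / (k ! * (ascPochhammer ℂ k).eval b) := by
  rw [regularizedHGFun_zero_singleton, ← tsum_mul_left]
  refine tsum_congr fun k ↦ ?_
  rw [← Gamma_add_nat_div_Gamma_eq b hb]
  field_simp

theorem tendsto_Gamma_mul_regularizedHGFun_zero_singleton {ι : Type*} {l : Filter ι} {b : ι → ℂ}
    (hb : Tendsto b l (cobounded ℂ)) {δ : ℝ} (hδ : 0 < δ)
    (hbδ : ∀ᶠ i in l, ∀ j : ℕ, δ ≤ ‖b i + j‖) (z : ℂ) :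
    Tendsto (fun i ↦ Gamma (b i) * regularizedHGFun 0 {b i} z) l (𝓝 1) := by
  have hterm (k : ℕ) : Tendsto (fun i ↦ z ^ k / (k ! * (ascPochhammer ℂ k).eval (b i))) l
      (𝓝 (if k = 0 then 1 else 0)) := by
    rcases eq_or_ne k 0 with rfl | hk
    · simpa using tendsto_const_nhds
    · simpa [hk, div_eq_mul_inv] using
        ((tendsto_inv₀_cobounded.comp (tendsto_ascPochhammer_eval_cobounded hb hk)).mul_const
          (k ! : ℂ)⁻¹).const_mul (z ^ k)
  have hbound : ∀ᶠ i in l, ∀ k : ℕ,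
      ‖z ^ k / (k ! * (ascPochhammer ℂ k).eval (b i))‖ ≤ (‖z‖ / δ) ^ k / k ! := by
    filter_upwards [hbδ] with i hi k
    rw [norm_div, norm_mul, norm_pow, Complex.norm_natCast, div_pow, div_div, mul_comm (δ ^ k)]
    gcongr
    exact pow_le_norm_ascPochhammer_eval hδ.le hi k
  have hlim := tendsto_tsum_of_dominated_convergence
    (Real.summable_pow_div_factorial (‖z‖ / δ)) hterm hbound
  rw [tsum_ite_eq] at hlim
  refine hlim.congr' ?_
  filter_upwards [hbδ] with i hi
  exact (Gamma_mul_regularizedHGFun_zero_singleton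
    (ne_neg_natCast_of_le_norm_add hδ hi) z).symm

theorem cpowR_eq_cpow {x : ℝ} (hx : 0 < x) (w : ℂ) : cpowR x w = (x : ℂ) ^ w := by
  rw [cpowR, cpow_def_of_ne_zero (ofReal_ne_zero.2 hx.ne'), ofReal_log hx.le, mul_comm]

theorem neg_mem_integerComplement {α : ℂ} (hα : α ∈ integerComplement) :
    -α ∈ integerComplement := by
  rintro ⟨n, hn⟩
  exact hα ⟨-n, by simp [hn]⟩

theorem exists_pos_le_norm_add_intCast {α : ℂ} (hα : α ∈ integerComplement) :
    ∃ δ > 0, ∀ n : ℤ, δ ≤ ‖α + n‖ := by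
  have hclosed : IsClosed (Set.range ((↑) : ℤ → ℂ)) :=
    (isometry_ofReal.isClosedEmbedding.comp Int.isClosedEmbedding_coe_real).isClosed_range
  refine ⟨Metric.infDist α (Set.range ((↑) : ℤ → ℂ)),
    (hclosed.notMem_iff_infDist_pos (Set.range_nonempty _)).1 hα, fun n ↦ ?_⟩
  simpa [dist_eq_norm] using Metric.infDist_le_dist_of_mem (x := α)
    (Set.mem_range_self (f := ((↑) : ℤ → ℂ)) (-n))

theorem besselJ_eq_cpow_mul_regularizedHGFun {r : ℝ} (hr : 0 < r) (ν : ℂ) :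
    besselJ ν r = (r / 2 : ℂ) ^ ν * regularizedHGFun 0 {ν + 1} (-(r / 2) ^ 2) := by
  have hx : (r / 2 : ℂ) ≠ 0 := by simpa using hr.ne'
  rw [besselJ, regularizedHGFun_zero_singleton, ← tsum_mul_left]
  refine tsum_congr fun k ↦ ?_
  have hpow : (r / 2 : ℂ) ^ (2 * k : ℂ) = ((r / 2 : ℂ) ^ 2) ^ k := by
    rw [← pow_mul, ← cpow_natCast]
    push_cast
    rfl
  rw [cpowR_eq_cpow (half_pos hr), ofReal_div, ofReal_ofNat, cpow_add _ _ hx, hpow,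
    Gamma_nat_eq_factorial, neg_pow (_ ^ 2), show (k : ℂ) + ν + 1 = ν + 1 + k by ring]
  ring

theorem tendsto_besselJ_add_natCast {r : ℝ} (hr : 0 < r) (α : ℂ) :
    Tendsto (fun n : ℕ ↦ besselJ (α + n) r) atTop (𝓝 0) := by
  have hb : Tendsto (fun n : ℕ ↦ α + 1 + n) atTop (cobounded ℂ) :=
    tendsto_const_add_natCast_cobounded (α + 1)
  have hb_le : ∀ᶠ n : ℕ in atTop, ∀ j : ℕ, 1 ≤ ‖α + 1 + n + j‖ := by
    have hnorm := (tendsto_norm_atTop_iff_cobounded.2 hb).eventually_ge_atTop 1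
    filter_upwards [eventually_forall_ge_atTop.2 hnorm] with n hn j
    simpa [add_assoc] using hn (n + j) (n.le_add_right j)
  have hreg := tendsto_Gamma_mul_regularizedHGFun_zero_singleton hb one_pos hb_le (-(r / 2) ^ 2)
  have hpow := (summable_pow_div_Gamma_add_natCast (r / 2) (α + 1)).tendsto_atTop_zero
  have hlim := (hpow.mul hreg).const_mul ((r / 2 : ℂ) ^ α)
  rw [zero_mul, mul_zero] at hlim
  refine hlim.congr' ?_
  filter_upwards [hb_le] with n hn
  have hGamma : Gamma (α + 1 + n) ≠ 0 :=
    Gamma_ne_zero (ne_neg_natCast_of_le_norm_add one_pos hn)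
  have hx : (r / 2 : ℂ) ≠ 0 := by simpa using hr.ne'
  rw [besselJ_eq_cpow_mul_regularizedHGFun hr, cpow_add _ _ hx, cpow_natCast,
    add_right_comm α n, ← mul_assoc (_ / _), div_mul_cancel₀ _ hGamma, mul_assoc]

theorem tendsto_besselJ_neg_add_natCast_cobounded {r : ℝ} (hr : 0 < r) {α : ℂ}
    (hα : α ∈ integerComplement) :
    Tendsto (fun n : ℕ ↦ besselJ (-(α + n)) r) atTop (cobounded ℂ) := by
  obtain ⟨δ, hδ, hαδ⟩ := exists_pos_le_norm_add_intCast hα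
  have hx : (r / 2 : ℂ) ≠ 0 := by simpa using hr.ne'
  have hb_le (n j : ℕ) : δ ≤ ‖1 - α - n + j‖ := by
    convert hαδ (n - j - 1) using 1
    rw [← norm_neg]
    push_cast
    ring_nf
  have hGamma (n : ℕ) : Gamma (1 - α - n) ≠ 0 :=
    Gamma_ne_zero (ne_neg_natCast_of_le_norm_add hδ (hb_le n))
  have hreg := tendsto_Gamma_mul_regularizedHGFun_zero_singleton
    (tendsto_const_sub_natCast_cobounded (1 - α)) hδ (.of_forall hb_le) (-(r / 2) ^ 2)
  have hpow : Tendsto (fun n : ℕ ↦ (r / 2 : ℂ) ^ α * ((r / 2) ^ n * Gamma (1 - α - n)))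
      atTop (𝓝[≠] 0) := by
    refine tendsto_nhdsWithin_iff.2 ⟨?_, .of_forall fun n ↦ ?_⟩
    · simpa using
        (summable_pow_mul_Gamma_sub_natCast (r / 2) (1 - α)).tendsto_atTop_zero.const_mul _
    · exact mul_ne_zero (by simp [cpow_eq_zero_iff, hx])
        (mul_ne_zero (pow_ne_zero n hx) (hGamma n))
  have hlim := (tendsto_norm_atTop_iff_cobounded.2
    (tendsto_inv₀_nhdsNE_zero.comp hpow)).atTop_mul_pos (norm_one (α := ℂ) ▸ one_pos) hreg.norm
  refine tendsto_norm_atTop_iff_cobounded.1 (hlim.congr fun n ↦ ?_)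
  rw [besselJ_eq_cpow_mul_regularizedHGFun hr, cpow_neg, cpow_add _ _ hx, cpow_natCast,
    show -(α + n) + 1 = 1 - α - n by ring, ← norm_mul, Function.comp_apply]
  congr 1
  have := hGamma n
  field_simp

theorem hankel1_neg (ν : ℂ) (r : ℝ) :
    hankel1 (-ν) r = exp (π * I * ν) * hankel1 ν r := by
  have hexp : exp (π * I * ν) ≠ 0 := exp_ne_zero _
  simp only [hankel1, mul_neg, neg_neg, sin_neg, exp_neg, div_neg, mul_div_assoc']
  rw [← neg_div]
  congr 1
  field_simp
  ring

theorem hankel2_neg (ν : ℂ) (r : ℝ) :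
    hankel2 (-ν) r = exp (-(π * I * ν)) * hankel2 ν r := by
  have hexp : exp (π * I * ν) ≠ 0 := exp_ne_zero _
  simp only [hankel2, mul_neg, neg_neg, sin_neg, exp_neg, div_neg, mul_div_assoc']
  rw [← neg_div]
  congr 1
  field_simp
  ring

theorem hankel2_div_hankel1 {ν : ℂ} (hν : ν ∈ integerComplement) {r : ℝ}
    (hJ : besselJ (-ν) r ≠ 0) :
    hankel2 ν r / hankel1 ν r =
      (exp (π * I * ν) * (besselJ ν r / besselJ (-ν) r) - 1) /
        (1 - exp (-(π * I * ν)) * (besselJ ν r / besselJ (-ν) r)) := by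
  have hsin : I * sin (π * ν) ≠ 0 := mul_ne_zero I_ne_zero (sin_pi_mul_ne_zero hν)
  rw [hankel1, hankel2, div_div_div_cancel_right₀ hsin,
    ← div_div_div_cancel_right₀ hJ (_ - _)]
  congr 1 <;> field_simp

theorem tendsto_exp_mul_zero {ι : Type*} {l : Filter ι} {w q : ι → ℂ} {C : ℝ}
    (hw : ∀ i, (w i).re ≤ C) (hq : Tendsto q l (𝓝 0)) :
    Tendsto (fun i ↦ exp (w i) * q i) l (𝓝 0) :=
  isBoundedUnder_le_mul_tendsto_zero
    (isBoundedUnder_of ⟨Real.exp C, fun i ↦ by simpa [norm_exp] using hw i⟩) hq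

theorem tendsto_hankel2_div_hankel1_add_natCast {r : ℝ} (hr : 0 < r) {α : ℂ}
    (hα : α ∈ integerComplement) :
    Tendsto (fun n : ℕ ↦ hankel2 (α + n) r / hankel1 (α + n) r) atTop (𝓝 (-1)) := by
  have hJ := tendsto_besselJ_neg_add_natCast_cobounded hr hα
  have hq : Tendsto (fun n : ℕ ↦ besselJ (α + n) r / besselJ (-(α + n)) r) atTop (𝓝 0) := by
    simpa [div_eq_mul_inv] using
      (tendsto_besselJ_add_natCast hr α).mul (tendsto_inv₀_cobounded.comp hJ)
  have hnum := tendsto_exp_mul_zero (w := fun n : ℕ ↦ π * I * (α + n))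
    (C := -(π * α.im)) (by simp) hq
  have hden := tendsto_exp_mul_zero (w := fun n : ℕ ↦ -(π * I * (α + n)))
    (C := π * α.im) (by simp) hq
  have hlim := (hnum.sub_const 1).div (hden.const_sub 1) (by simp)
  rw [show (0 - 1 : ℂ) / (1 - 0) = -1 by norm_num] at hlim
  refine hlim.congr' ?_
  filter_upwards [hJ.eventually_ne_cobounded 0] with n hn
  exact (hankel2_div_hankel1 (mod_cast (add_intCast_mem_integerComplement n).2 hα) hn).symm

/-- The free Regge interpolation function `σ₀(l)` of the magnetic flux `γ`, at the radius `r`. -/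
noncomputable def freeRegge (γ : ℂ) (r : ℝ) (l : ℤ) : ℂ :=
  -exp (π * I * γ) * hankel2 (l - γ) r / hankel1 (l - γ) r

theorem freeRegge_neg_right (γ : ℂ) (r : ℝ) (l : ℤ) :
    freeRegge γ r (-l) = freeRegge (-γ) r l := by
  have hphase : exp (π * I * γ) * exp (-(π * I * (l + γ))) =
      exp (-(π * I * γ)) * exp (π * I * (l + γ)) := by
    rw [← exp_add, ← exp_add, exp_eq_exp_iff_exists_int]
    exact ⟨-l, by push_cast; ring⟩
  have hnum : exp (π * I * γ) * (exp (-(π * I * (l + γ))) * hankel2 (l + γ) r) =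
      exp (π * I * (l + γ)) * (exp (-(π * I * γ)) * hankel2 (l + γ) r) := by
    rw [← mul_assoc, hphase]
    ring
  rw [freeRegge, freeRegge, Int.cast_neg, sub_neg_eq_add, show -(l : ℂ) - γ = -(l + γ) by ring,
    hankel1_neg, hankel2_neg, neg_mul, hnum, ← mul_neg, mul_div_mul_left _ _ (exp_ne_zero _),
    mul_neg (π * I) γ, neg_mul]

theorem tendsto_freeRegge_atTop {γ : ℂ} (hγ : γ ∈ integerComplement) {r : ℝ} (hr : 0 < r) :
    Tendsto (freeRegge γ r) atTop (𝓝 (exp (π * I * γ))) := by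
  rw [← Nat.map_cast_int_atTop, tendsto_map'_iff]
  have := (tendsto_hankel2_div_hankel1_add_natCast hr (neg_mem_integerComplement hγ)).const_mul
    (-exp (π * I * γ))
  simpa [Function.comp_def, freeRegge, neg_div, mul_div_assoc, neg_add_eq_sub] using this

theorem tendsto_freeRegge_atBot {γ : ℂ} (hγ : γ ∈ integerComplement) {r : ℝ} (hr : 0 < r) :
    Tendsto (freeRegge γ r) atBot (𝓝 (exp (-(π * I * γ)))) := by
  have := (tendsto_freeRegge_atTop (neg_mem_integerComplement hγ) hr).comp tendsto_neg_atBot_atTop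
  simpa [Function.comp_def, ← freeRegge_neg_right] using this

theorem regge_free_limits_general {γ : ℂ} (hγ : γ ∈ integerComplement) {r : ℝ} (hr : 0 < r) :
    Tendsto (freeRegge γ r) atTop (𝓝 (exp (π * I * γ))) ∧
      Tendsto (freeRegge γ r) atBot (𝓝 (exp (-(π * I * γ)))) :=
  ⟨tendsto_freeRegge_atTop hγ hr, tendsto_freeRegge_atBot hγ hr⟩

/-- the free Regge interpolation values
`σ₀(l) = −e^{iπγ_R}·H²_{l−γ_R}(r₀)/H¹_{l−γ_R}(r₀)` satisfy `σ₀(l) → e^{iπγ_R}` as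
`l → +∞` and `σ₀(l) → e^{−iπγ_R}` as `l → −∞`. -/
theorem regge_free_limits (r₀ γR : ℝ) (h0 : 0 < r₀) (hγ : ∀ n : ℤ, γR ≠ (n : ℝ)) :
    Filter.Tendsto
        (fun l : ℤ => -Complex.exp (Real.pi * Complex.I * γR) *
          hankel2 ((l : ℂ) - γR) r₀ / hankel1 ((l : ℂ) - γR) r₀)
        Filter.atTop (nhds (Complex.exp (Real.pi * Complex.I * γR))) ∧
    Filter.Tendsto
        (fun l : ℤ => -Complex.exp (Real.pi * Complex.I * γR) *
          hankel2 ((l : ℂ) - γR) r₀ / hankel1 ((l : ℂ) - γR) r₀)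
        Filter.atBot (nhds (Complex.exp (-(Real.pi * Complex.I * γR)))) := by
  have hγ' : (γR : ℂ) ∈ integerComplement := by
    rintro ⟨n, hn⟩
    exact hγ n (mod_cast hn.symm)
  exact regge_free_limits_general hγ' h0
end

section
/- Let 0 < r₀ < R, let μ ∈ ℂ with Re μ ≥ 0, and let q, q̃ : [r₀,∞) → ℂ be continuous functions vanishing identically on [R,∞). Suppose F⁺, F⁻, F̃⁺, F̃⁻ : [r₀,∞) → ℂ are twice continuously differentiable and satisfy (F^±)''(r) = ((μ²−1/4)/r² + q(r) − 1)·F^±(r) and (F̃^±)''(r) = ((μ²−1/4)/r² + q̃(r) − 1)·F̃^±(r) for all r ≥ r₀, together with the Jost asymptotics F^±(r)·e^{∓ir} → 1, (F^±)'(r)·e^{∓ir} → ±i, F̃^±(r)·e^{∓ir} → 1, (F̃^±)'(r)·e^{∓ir} → ±i as r → ∞. Define the Jost functions α = i·F⁻(r₀), β = −i·F⁺(r₀), α̃ = i·F̃⁻(r₀), β̃ = −i·F̃⁺(r₀), and the regular solutions Φ(r) = i·(F⁻(r₀)·F⁺(r) − F⁺(r₀)·F⁻(r)) and Φ̃(r)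 = i·(F̃⁻(r₀)·F̃⁺(r) − F̃⁺(r₀)·F̃⁻(r)). Then α·β̃ − α̃·β = (1/(2i))·∫_{r₀}^{∞} (q(r) − q̃(r))·Φ(r)·Φ̃(r) dr. -/
open Set Filter MeasureTheory

/-!
The cross Wronskian `W = Φ̃ Φ' - Φ̃' Φ` of the two regular solutions satisfies
`W' = (q - q̃) Φ Φ̃`, since the centrifugal and energy terms cancel, and the Dirichlet condition
gives `W(r₀) = 0`. So the integral is the limit of `W` at infinity. Expanding `Φ = α F⁺ + β F⁻`
and `Φ̃ = α̃ F̃⁺ + β̃ F̃⁻`, this limit splits into four Wronskians of Jost solutions, determined by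
their asymptotics alone: those of equal phase tend to `0`, those of opposite phase to `±2i`, which
leaves `2i (α β̃ - α̃ β)`.
-/

section Wronskian

variable {𝕜 A : Type*} [NontriviallyNormedField 𝕜] [NormedCommRing A] [NormedAlgebra 𝕜 A]
  {V Vt u u' v v' : 𝕜 → A} {S : Set 𝕜}

/-- The Wronskian `u v' - u' v`. The derivatives are separate arguments, so that it can be used
with one-sided derivatives at the end of an interval. -/
def wronskian {X R : Type*} [CommRing R] (u u' v v' : X → R) (x : X) : R :=
  u x * v' x - u' x * v x

lemma wronskian_eq_zero {X R : Type*} [CommRing R] {u v : X → R} {x : X} (hu : u x = 0)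
    (hv : v x = 0) (u' v' : X → R) : wronskian u u' v v' x = 0 := by
  rw [wronskian, hu, hv, zero_mul, mul_zero, sub_zero]

/-- `u` solves the linear second-order equation `u'' = V u` on `S` with derivative `u'`, all
derivatives being taken within `S`. -/
structure IsSchrodingerSolution (V : 𝕜 → A) (S : Set 𝕜) (u u' : 𝕜 → A) : Prop where
  hasDerivWithinAt : ∀ x ∈ S, HasDerivWithinAt u (u' x) S x
  hasDerivWithinAt_deriv : ∀ x ∈ S, HasDerivWithinAt u' (V x * u x) S x

lemma IsSchrodingerSolution.continuousOn (hu : IsSchrodingerSolution V S u u') :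
    ContinuousOn u S :=
  fun x hx => (hu.hasDerivWithinAt x hx).continuousWithinAt

lemma IsSchrodingerSolution.linearCombination (hu : IsSchrodingerSolution V S u u')
    (hv : IsSchrodingerSolution V S v v') (a b : A) :
    IsSchrodingerSolution V S (a • u + b • v) (a • u' + b • v') where
  hasDerivWithinAt x hx :=
    ((hu.hasDerivWithinAt x hx).const_mul a).add ((hv.hasDerivWithinAt x hx).const_mul b)
  hasDerivWithinAt_deriv x hx :=
    (((hu.hasDerivWithinAt_deriv x hx).const_mul a).add
      ((hv.hasDerivWithinAt_deriv x hx).const_mul b)).congr_deriv (by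
        simp only [Pi.add_apply, Pi.smul_apply, smul_eq_mul]; ring)

lemma IsSchrodingerSolution.hasDerivWithinAt_wronskian (hu : IsSchrodingerSolution V S u u')
    (hv : IsSchrodingerSolution Vt S v v') {x : 𝕜} (hx : x ∈ S) :
    HasDerivWithinAt (wronskian v v' u u') ((V x - Vt x) * u x * v x) S x :=
  (((hv.hasDerivWithinAt x hx).mul (hu.hasDerivWithinAt_deriv x hx)).sub
    ((hv.hasDerivWithinAt_deriv x hx).mul (hu.hasDerivWithinAt x hx))).congr_deriv (by ring)

end Wronskian

lemma IsSchrodingerSolution.integral_Ioi_eq_sub_wronskian {A : Type*} [NormedCommRing A]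
    [NormedAlgebra ℝ A] [CompleteSpace A] {V Vt u u' v v' : ℝ → A} {a : ℝ} {L : A}
    (hu : IsSchrodingerSolution V (Ici a) u u') (hv : IsSchrodingerSolution Vt (Ici a) v v')
    (hint : IntegrableOn (fun r => (V r - Vt r) * u r * v r) (Ioi a))
    (hlim : Tendsto (wronskian v v' u u') atTop (nhds L)) :
    ∫ r in Ioi a, (V r - Vt r) * u r * v r = L - wronskian v v' u u' a :=
  integral_Ioi_of_hasDerivAt_of_tendsto
    (hu.hasDerivWithinAt_wronskian hv self_mem_Ici).continuousWithinAt
    (fun _ hr => (hu.hasDerivWithinAt_wronskian hv (Ioi_subset_Ici_self hr)).hasDerivAt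
      (Ici_mem_nhds hr)) hint hlim

section Integrability

open Asymptotics

variable {A : Type*} {a : ℝ}

lemma integrableOn_Ici_of_eventuallyEq_zero [NormedAddCommGroup A] {f : ℝ → A}
    (hf : ContinuousOn f (Ici a)) (hf0 : f =ᶠ[atTop] 0) : IntegrableOn f (Ici a) :=
  (hf.locallyIntegrableOn measurableSet_Ici).integrableOn_of_isBigO_atTop
    (hf0.trans_isBigO (isBigO_zero (0 : ℝ → A) atTop)) ((integrable_zero ..).integrableAtFilter _)

lemma integrableOn_Ici_mul_of_isBigO_one [NormedRing A] {f g : ℝ → A}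
    (hf : IntegrableOn f (Ici a)) (hg : ContinuousOn g (Ici a))
    (hg1 : g =O[atTop] (1 : ℝ → ℝ)) : IntegrableOn (fun r => f r * g r) (Ici a) := by
  refine (hf.locallyIntegrableOn.mul_continuousOn hg
    isClosed_Ici.isLocallyClosed).integrableOn_of_isBigO_atTop (g := fun r => ‖f r‖) ?_
    ⟨Ici a, Ici_mem_atTop a, hf.norm⟩
  simpa using (isBigO_refl f atTop).norm_right.mul hg1

end Integrability

/-- The Jost asymptotics with exponent `s`: `u` behaves like `e^{s r}` at infinity, and its
derivative `u'` like `s e^{s r}`. The solutions `F^±` at energy `k²` have exponents `±i k`. -/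
structure HasJostAsymptotics (s : ℂ) (u u' : ℝ → ℂ) : Prop where
  tendsto_mul_exp : Tendsto (fun r : ℝ => u r * Complex.exp (-(s * r))) atTop (nhds 1)
  tendsto_deriv_mul_exp : Tendsto (fun r : ℝ => u' r * Complex.exp (-(s * r))) atTop (nhds s)

lemma norm_exp_neg_mul_ofReal {s : ℂ} (hs : s.re = 0) (r : ℝ) :
    ‖Complex.exp (-(s * r))‖ = 1 := by
  simp [Complex.norm_exp, hs]

namespace HasJostAsymptotics

open Asymptotics

variable {s t : ℂ} {u u' v v' : ℝ → ℂ}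

lemma isBigO_one (hu : HasJostAsymptotics s u u') (hs : s.re = 0) :
    u =O[atTop] (1 : ℝ → ℝ) := by
  have h := (hu.tendsto_mul_exp.isBigO_one ℝ).norm_left
  simp only [norm_mul, norm_exp_neg_mul_ofReal hs, mul_one] at h
  exact h.of_norm_left

lemma tendsto_wronskian_mul_exp (hu : HasJostAsymptotics s u u')
    (hv : HasJostAsymptotics t v v') :
    Tendsto (fun r : ℝ => wronskian u u' v v' r * Complex.exp (-((s + t) * r))) atTop
      (nhds (t - s)) := by
  have h := (hu.tendsto_mul_exp.mul hv.tendsto_deriv_mul_exp).sub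
    (hu.tendsto_deriv_mul_exp.mul hv.tendsto_mul_exp)
  rw [one_mul, mul_one] at h
  refine h.congr fun r => ?_
  rw [add_mul, neg_add, Complex.exp_add, wronskian]
  ring

lemma tendsto_wronskian_neg (hu : HasJostAsymptotics s u u')
    (hv : HasJostAsymptotics (-s) v v') :
    Tendsto (wronskian u u' v v') atTop (nhds (-(2 * s))) := by
  simpa [two_mul, sub_eq_add_neg] using hu.tendsto_wronskian_mul_exp hv

/-- The phase factor `e^{-2 s r}` need not converge, but it is unimodular. -/
lemma tendsto_wronskian_zero (hu : HasJostAsymptotics s u u')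
    (hv : HasJostAsymptotics s v v') (hs : s.re = 0) :
    Tendsto (wronskian u u' v v') atTop (nhds 0) := by
  have h := hu.tendsto_wronskian_mul_exp hv
  rw [sub_self, tendsto_zero_iff_norm_tendsto_zero] at h
  rw [tendsto_zero_iff_norm_tendsto_zero]
  have hss : (s + s).re = 0 := by simp [hs]
  simpa only [norm_mul, norm_exp_neg_mul_ofReal hss, mul_one] using h

lemma tendsto_wronskian_linearCombination {Fp Fp' Fm Fm' Gp Gp' Gm Gm' : ℝ → ℂ}
    (hs : s.re = 0) (hFp : HasJostAsymptotics s Fp Fp') (hFm : HasJostAsymptotics (-s) Fm Fm')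
    (hGp : HasJostAsymptotics s Gp Gp') (hGm : HasJostAsymptotics (-s) Gm Gm')
    (α β αt βt : ℂ) :
    Tendsto (wronskian (αt • Gp + βt • Gm) (αt • Gp' + βt • Gm') (α • Fp + β • Fm)
      (α • Fp' + β • Fm')) atTop (nhds (2 * s * (α * βt - αt * β))) := by
  have hFp' : HasJostAsymptotics (-(-s)) Fp Fp' := by rwa [neg_neg]
  have hpp := (hGp.tendsto_wronskian_zero hFp hs).const_mul (αt * α)
  have hmm := (hGm.tendsto_wronskian_zero hFm (by simpa using hs)).const_mul (βt * β)
  have hpm := (hGp.tendsto_wronskian_neg hFm).const_mul (αt * β)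
  have hmp := (hGm.tendsto_wronskian_neg hFp').const_mul (βt * α)
  convert ((hpp.add hmm).add hpm).add hmp using 2
  · simp only [wronskian, Pi.add_apply, Pi.smul_apply, smul_eq_mul]
    ring
  · ring

end HasJostAsymptotics

/-- `u`, with derivative `u'`, is the Jost solution of `u'' = V u` on `[r₀, ∞)` with exponent `s`.
At energy `k²` the coefficient `V` includes the centrifugal term and `-k²`. -/
structure IsJostSolution (V : ℝ → ℂ) (r₀ : ℝ) (s : ℂ) (u u' : ℝ → ℂ) : Prop
    extends IsSchrodingerSolution V (Ici r₀) u u', HasJostAsymptotics s u u'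

lemma IsJostSolution.integrableOn_sub_mul_linearCombination {V Vt : ℝ → ℂ} {r₀ : ℝ} {s : ℂ}
    {Fp Fp' Fm Fm' Gp Gp' Gm Gm' : ℝ → ℂ} (hs : s.re = 0)
    (hV : IntegrableOn (fun r => V r - Vt r) (Ici r₀))
    (hFp : IsJostSolution V r₀ s Fp Fp') (hFm : IsJostSolution V r₀ (-s) Fm Fm')
    (hGp : IsJostSolution Vt r₀ s Gp Gp') (hGm : IsJostSolution Vt r₀ (-s) Gm Gm')
    (α β αt βt : ℂ) :
    IntegrableOn (fun r => (V r - Vt r) * (α • Fp + β • Fm) r * (αt • Gp + βt • Gm) r)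
      (Ici r₀) := by
  have hs' : (-s).re = 0 := by simpa using hs
  have hF := hFp.linearCombination hFm.toIsSchrodingerSolution α β
  have hG := hGp.linearCombination hGm.toIsSchrodingerSolution αt βt
  refine integrableOn_Ici_mul_of_isBigO_one
    (integrableOn_Ici_mul_of_isBigO_one hV hF.continuousOn ?_) hG.continuousOn ?_
  · exact ((hFp.isBigO_one hs).const_smul_left α).add ((hFm.isBigO_one hs').const_smul_left β)
  · exact ((hGp.isBigO_one hs).const_smul_left αt).add ((hGm.isBigO_one hs').const_smul_left βt)

/-- The regular solution `Φ(r) = i (F⁻(r₀) F⁺(r) - F⁺(r₀) F⁻(r))` vanishing at `r₀`, built from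
the Jost solutions `Fp = F⁺` and `Fm = F⁻`. -/
def regularSolution (r₀ : ℝ) (Fp Fm : ℝ → ℂ) (r : ℝ) : ℂ :=
  Complex.I * (Fm r₀ * Fp r - Fp r₀ * Fm r)

lemma regularSolution_self (r₀ : ℝ) (Fp Fm : ℝ → ℂ) : regularSolution r₀ Fp Fm r₀ = 0 := by
  rw [regularSolution, mul_comm (Fm r₀), sub_self, mul_zero]

lemma regularSolution_eq_linearCombination (r₀ : ℝ) (Fp Fm : ℝ → ℂ) :
    regularSolution r₀ Fp Fm = (Complex.I * Fm r₀) • Fp + (-Complex.I * Fp r₀) • Fm := by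
  ext r
  simp only [regularSolution, Pi.add_apply, Pi.smul_apply, smul_eq_mul]
  ring

theorem jost_function_algebraic_identity_general {V Vt : ℝ → ℂ} {r₀ : ℝ} {s : ℂ}
    {Fp Fp' Fm Fm' Gp Gp' Gm Gm' : ℝ → ℂ} (hs : s.re = 0)
    (hV : IntegrableOn (fun r => V r - Vt r) (Ici r₀))
    (hFp : IsJostSolution V r₀ s Fp Fp') (hFm : IsJostSolution V r₀ (-s) Fm Fm')
    (hGp : IsJostSolution Vt r₀ s Gp Gp') (hGm : IsJostSolution Vt r₀ (-s) Gm Gm') :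
    2 * s * ((Complex.I * Fm r₀) * (-Complex.I * Gp r₀) -
        (Complex.I * Gm r₀) * (-Complex.I * Fp r₀)) =
      ∫ r in Ioi r₀, (V r - Vt r) * regularSolution r₀ Fp Fm r * regularSolution r₀ Gp Gm r := by
  have hΦ := hFp.linearCombination hFm.toIsSchrodingerSolution
    (Complex.I * Fm r₀) (-Complex.I * Fp r₀)
  have hΦt := hGp.linearCombination hGm.toIsSchrodingerSolution
    (Complex.I * Gm r₀) (-Complex.I * Gp r₀)
  have hint := hFp.integrableOn_sub_mul_linearCombination hs hV hFm hGp hGm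
    (Complex.I * Fm r₀) (-Complex.I * Fp r₀) (Complex.I * Gm r₀) (-Complex.I * Gp r₀)
  have hlim := hFp.tendsto_wronskian_linearCombination hs hFm.toHasJostAsymptotics
    hGp.toHasJostAsymptotics hGm.toHasJostAsymptotics
    (Complex.I * Fm r₀) (-Complex.I * Fp r₀) (Complex.I * Gm r₀) (-Complex.I * Gp r₀)
  simp only [← regularSolution_eq_linearCombination] at hΦ hΦt hint hlim
  rw [hΦ.integral_Ioi_eq_sub_wronskian hΦt (hint.mono_set Ioi_subset_Ici_self) hlim,
    wronskian_eq_zero (regularSolution_self ..) (regularSolution_self ..), sub_zero]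

/-- algebraic identity for the Jost functions. With `α = i·F⁻(r₀)`,
`β = −i·F⁺(r₀)`, `α̃ = i·F̃⁻(r₀)`, `β̃ = −i·F̃⁺(r₀)` and the regular solutions
`Φ = i·(F⁻(r₀)·F⁺ − F⁺(r₀)·F⁻)`, `Φ̃ = i·(F̃⁻(r₀)·F̃⁺ − F̃⁺(r₀)·F̃⁻)`, one has
`α·β̃ − α̃·β = (1/(2i))·∫_{r₀}^{∞} (q − q̃)·Φ·Φ̃`. -/
theorem jost_function_algebraic_identity (r₀ R : ℝ) (h0 : 0 < r₀) (hrR : r₀ < R)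
    (μ : ℂ) (hμ : 0 ≤ μ.re)
    (q qt : ℝ → ℂ) (hq : ContinuousOn q (Ici r₀)) (hqt : ContinuousOn qt (Ici r₀))
    (hqsupp : ∀ r : ℝ, R ≤ r → q r = 0) (hqtsupp : ∀ r : ℝ, R ≤ r → qt r = 0)
    (Fp Fp' Fm Fm' Gp Gp' Gm Gm' : ℝ → ℂ)
    (hFp : ∀ r ∈ Ici r₀, HasDerivWithinAt Fp (Fp' r) (Ici r₀) r)
    (hFp' : ∀ r ∈ Ici r₀, HasDerivWithinAt Fp'
      (((μ ^ 2 - 1 / 4) / (r : ℂ) ^ 2 + q r - 1) * Fp r) (Ici r₀) r)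
    (hFm : ∀ r ∈ Ici r₀, HasDerivWithinAt Fm (Fm' r) (Ici r₀) r)
    (hFm' : ∀ r ∈ Ici r₀, HasDerivWithinAt Fm'
      (((μ ^ 2 - 1 / 4) / (r : ℂ) ^ 2 + q r - 1) * Fm r) (Ici r₀) r)
    (hGp : ∀ r ∈ Ici r₀, HasDerivWithinAt Gp (Gp' r) (Ici r₀) r)
    (hGp' : ∀ r ∈ Ici r₀, HasDerivWithinAt Gp'
      (((μ ^ 2 - 1 / 4) / (r : ℂ) ^ 2 + qt r - 1) * Gp r) (Ici r₀) r)
    (hGm : ∀ r ∈ Ici r₀, HasDerivWithinAt Gm (Gm' r) (Ici r₀) r)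
    (hGm' : ∀ r ∈ Ici r₀, HasDerivWithinAt Gm'
      (((μ ^ 2 - 1 / 4) / (r : ℂ) ^ 2 + qt r - 1) * Gm r) (Ici r₀) r)
    (haFp : Tendsto (fun r : ℝ => Fp r * Complex.exp (-(Complex.I * r))) atTop (nhds 1))
    (haFp' : Tendsto (fun r : ℝ => Fp' r * Complex.exp (-(Complex.I * r))) atTop
      (nhds Complex.I))
    (haFm : Tendsto (fun r : ℝ => Fm r * Complex.exp (Complex.I * r)) atTop (nhds 1))
    (haFm' : Tendsto (fun r : ℝ => Fm' r * Complex.exp (Complex.I * r)) atTop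
      (nhds (-Complex.I)))
    (haGp : Tendsto (fun r : ℝ => Gp r * Complex.exp (-(Complex.I * r))) atTop (nhds 1))
    (haGp' : Tendsto (fun r : ℝ => Gp' r * Complex.exp (-(Complex.I * r))) atTop
      (nhds Complex.I))
    (haGm : Tendsto (fun r : ℝ => Gm r * Complex.exp (Complex.I * r)) atTop (nhds 1))
    (haGm' : Tendsto (fun r : ℝ => Gm' r * Complex.exp (Complex.I * r)) atTop
      (nhds (-Complex.I))) :
    (Complex.I * Fm r₀) * (-Complex.I * Gp r₀) - (Complex.I * Gm r₀) * (-Complex.I * Fp r₀)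
      = 1 / (2 * Complex.I) * ∫ r in Ioi r₀, (q r - qt r) *
          (Complex.I * (Fm r₀ * Fp r - Fp r₀ * Fm r)) *
          (Complex.I * (Gm r₀ * Gp r - Gp r₀ * Gm r)) := by
  have hV (r : ℝ) : ((μ ^ 2 - 1 / 4) / (r : ℂ) ^ 2 + q r - 1) -
      ((μ ^ 2 - 1 / 4) / (r : ℂ) ^ 2 + qt r - 1) = q r - qt r := by ring
  have hint : IntegrableOn (fun r => q r - qt r) (Ici r₀) :=
    integrableOn_Ici_of_eventuallyEq_zero (hq.sub hqt) <|
      (eventually_ge_atTop R).mono fun r hr => by simp [hqsupp r hr, hqtsupp r hr]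
  have key := jost_function_algebraic_identity_general Complex.I_re (by simpa only [hV] using hint)
    ⟨⟨hFp, hFp'⟩, ⟨haFp, haFp'⟩⟩ ⟨⟨hFm, hFm'⟩, ⟨by simpa using haFm, by simpa using haFm'⟩⟩
    ⟨⟨hGp, hGp'⟩, ⟨haGp, haGp'⟩⟩ ⟨⟨hGm, hGm'⟩, ⟨by simpa using haGm, by simpa using haGm'⟩⟩
  simp only [hV] at key
  rw [one_div, eq_inv_mul_iff_mul_eq₀ (by simp)]
  exact key
end
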